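/- arXiv:0909.3362 — 3 statements merged into one kernel-verified Lean document; each statement's English description precedes it below -/
import Mathlib

section
/- Let R be a vector space with multilinear operations M_{1q} : R × R^q → R (q ≥ 0, M_{10} = id), extended to maps M(X;Y) on words by the stated conventions, and let ⋆ be the product on T(R) defined by the Loday–Ronco formula. Then the operations M_{1q} satisfy the brace relation if and only if M(M(X;Y);Z) = M(X; Y ⋆ Z) for every letter X ∈ R and all words Y, Z ∈ T(R). -/
/-! Common setup: words in `T(R)`, factorizations, extended brace maps,
and the Loday–Ronco product. -/

section

variable (K : Type*) [Field K]
variable {R : Type*} [AddCommGroup R] [Module K R]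

/-- All splittings of a list into a prefix and a suffix (concatenation factorizations
into two factors). -/
def splits {α : Type*} (l : List α) : List (List α × List α) :=
  (List.range (l.length + 1)).map fun i => (l.take i, l.drop i)

/-- All factorizations of a list into `k` (possibly empty) consecutive concatenation
factors. -/
def splitsN {α : Type*} : ℕ → List α → List (List (List α))
  | 0, l => if l.isEmpty then [[]] else []
  | k + 1, l => (splits l).flatMap fun p => (splitsN k p.2).map fun r => p.1 :: r

variable {K}

/-- The extension `M(X;Y)` of the brace operations `M_{1q}` to pairs of words:
`M(1;1) = 0`, `M(1;y) = y` and `M(x;Y) = M_{1q}(x;Y)` for a single letter `x`,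
and `M(X;Y) = 0` whenever `X` has length `> 1` (in particular `M(X;1) = 0` for
`|X| > 1`), and `M(1;Y) = 0` for `|Y| > 1`. -/
def Mext (M : R → List R → R) : List R → List R → R
  | [], [] => 0
  | [], [y] => y
  | [], _ :: _ :: _ => 0
  | [x], ys => M x ys
  | _ :: _ :: _, _ => 0

/-- The list of words (with multiplicities) whose formal sum is the Loday–Ronco
product `X ⋆ Y = Σ_{k ≥ 1} Σ_{X = X¹⋯X^k, Y = Y¹⋯Y^k} M(X¹;Y¹)⋯M(X^k;Y^k)`;
the terms with `k > |X| + |Y|` vanish in `T(R)` (each contains a letter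
`M(1;1) = 0`), and `1 ⋆ 1 = 1`. -/
def starWords (M : R → List R → R) : List R → List R → List (List R)
  | [], [] => [[]]
  | X, Y =>
    (List.range (X.length + Y.length)).flatMap fun k =>
      (splitsN (k + 1) X).flatMap fun Xs =>
        (splitsN (k + 1) Y).map fun Ys => List.zipWith (Mext M) Xs Ys

variable (K)

/-- A word `x₁⋯xₙ ∈ R^{⊗n} ⊂ T(R)`, realized in the tensor algebra. -/
def wd (l : List R) : TensorAlgebra K R :=
  (l.map fun x => TensorAlgebra.ι K x).prod

/-- The Loday–Ronco product `⋆` on `T(R)`, evaluated on two words. -/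
def starW (M : R → List R → R) (X Y : List R) : TensorAlgebra K R :=
  ((starWords M X Y).map (wd K)).sum

variable {K}

/-- The word `z₁ ⋯ {y₁; z_{k₁},…} ⋯ {yₙ; z_{kₙ},…} ⋯ z_m` appearing on the right-hand
side of the brace relation: the factorization `Zs = P₀B₁P₁⋯BₙPₙ` of the word `zs`
into `2n+1` consecutive (possibly empty) blocks singles out the blocks `Bᵢ` braced
into the `yᵢ`, in order, the remaining letters left in place. -/
def braceRHSword (M : R → List R → R) : List (List R) → List R → List R
  | [P], [] => P
  | P :: B :: rest, y :: ys => P ++ M y B :: braceRHSword M rest ys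
  | _, _ => []

/-- The brace relation
`{{x; y₁,…,yₙ}; z₁,…,z_m} = Σ {x; z₁,…,{y₁; z_{k₁},…},…,{yₙ; z_{kₙ},…},…,z_m}`,
the sum running over all ways to choose `n` disjoint consecutive (possibly empty)
blocks of `z₁⋯z_m`, in this order, braced into `y₁,…,yₙ`. -/
def BraceRel (M : R → List R → R) : Prop :=
  ∀ (x : R) (ys zs : List R),
    M (M x ys) zs =
      ((splitsN (2 * ys.length + 1) zs).map fun Zs => M x (braceRHSword M Zs ys)).sum

end

section helpers

theorem sum_map_flatMap_aux {α β R : Type*} [AddCommGroup R] (l : List α) (g : α → List β)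
    (h : β → R) :
    ((l.flatMap g).map h).sum = (l.map fun a => ((g a).map h).sum).sum := by
  induction l with
  | nil => simp
  | cons a l ih => simp [List.flatMap_cons, ih]

theorem sum_map_add_aux {α R : Type*} [AddCommGroup R] (l : List α) (g h : α → R) :
    (l.map fun a => g a + h a).sum = (l.map g).sum + (l.map h).sum := by
  induction l with
  | nil => simp
  | cons a l ih => simp only [List.map_cons, List.sum_cons, ih]; abel

theorem sum_map_zero_aux {α R : Type*} [AddCommGroup R] (l : List α) :
    (l.map fun _ => (0 : R)).sum = 0 := by
  induction l with
  | nil => simp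
  | cons a l ih => simp only [List.map_cons, List.sum_cons, ih, add_zero]

theorem sum_comm_aux {α β R : Type*} [AddCommGroup R] (l : List α) (m : List β)
    (g : α → β → R) :
    (l.map fun a => (m.map fun b => g a b).sum).sum
      = (m.map fun b => (l.map fun a => g a b).sum).sum := by
  induction l with
  | nil => simp [sum_map_zero_aux]
  | cons a l ih => simp only [List.map_cons, List.sum_cons, ih, sum_map_add_aux]

theorem splits_nil_aux {α : Type*} : splits ([] : List α) = [([], [])] := by
  simp [splits]

theorem splits_cons_aux {α : Type*} (a : α) (l : List α) :
    splits (a :: l) = ([], a :: l) :: (splits l).map (fun p => (a :: p.1, p.2)) := by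
  simp [splits, List.range_succ_eq_map, Function.comp_def]

theorem length_of_mem_splits {α : Type*} (l : List α) (p : List α × List α)
    (hp : p ∈ splits l) : p.2.length ≤ l.length := by
  simp only [splits, List.mem_map] at hp
  obtain ⟨i, _, rfl⟩ := hp
  simp

variable {R : Type*} [AddCommGroup R]

/-- The part of the product with exactly `k` factors. -/
def Fk (M : R → List R → R) (f : List R → R) (k : ℕ) (X Z : List R) : R :=
  ((splitsN k X).map fun Xs =>
    ((splitsN k Z).map fun Zs => f (List.zipWith (Mext M) Xs Zs)).sum).sum

theorem Fk_succ (M : R → List R → R) (f : List R → R) (k : ℕ) (X Z : List R) :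
    Fk M f (k + 1) X Z = ((splits X).map fun p => ((splits Z).map fun q =>
      Fk M (fun w => f (Mext M p.1 q.1 :: w)) k p.2 q.2).sum).sum := by
  simp only [Fk, splitsN, sum_map_flatMap_aux, List.map_map, Function.comp_def,
    List.zipWith_cons_cons]
  congr 1
  apply List.map_congr_left
  intro p _
  rw [sum_comm_aux]

theorem Fk_zero_fun (M : R → List R → R) (k : ℕ) (X Z : List R) :
    Fk M (fun _ => 0) k X Z = 0 := by
  simp only [Fk, sum_map_zero_aux]

/-- The sum with fewer than `N` factors. -/
def SN (M : R → List R → R) (f : List R → R) (N : ℕ) (X Z : List R) : R :=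
  ((List.range N).map fun k => Fk M f k X Z).sum

theorem SN_zero_fun (M : R → List R → R) (N : ℕ) (X Z : List R) :
    SN M (fun _ => 0) N X Z = 0 := by
  simp only [SN, Fk_zero_fun, sum_map_zero_aux]

theorem SN_succ (M : R → List R → R) (f : List R → R) (N : ℕ) (X Z : List R) :
    SN M f (N + 1) X Z = Fk M f 0 X Z + ((splits X).map fun p => ((splits Z).map fun q =>
      SN M (fun w => f (Mext M p.1 q.1 :: w)) N p.2 q.2).sum).sum := by
  simp only [SN, List.range_succ_eq_map, List.map_cons, List.sum_cons, List.map_map,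
    Function.comp_def, Nat.succ_eq_add_one, Fk_succ]
  congr 1
  rw [sum_comm_aux]
  congr 1
  apply List.map_congr_left
  intro p _
  rw [sum_comm_aux]

/-- The right-hand side of the brace relation. -/
def BS (M : R → List R → R) (f : List R → R) (X Z : List R) : R :=
  ((splitsN (2 * X.length + 1) Z).map fun Zs => f (braceRHSword M Zs X)).sum

theorem splitsN_one_aux {α : Type*} (l : List α) : splitsN 1 l = [[l]] := by
  induction l with
  | nil => simp [splitsN, splits_nil_aux]
  | cons a l ih =>
    simp only [splitsN] at ih ⊢
    rw [splits_cons_aux, List.flatMap_cons, List.flatMap_map]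
    have := congrArg (List.map (List.modifyHead (a :: ·))) ih
    rw [List.map_flatMap] at this
    simpa [Function.comp_def] using this

theorem BS_nil (M : R → List R → R) (f : List R → R) (Z : List R) :
    BS M f [] Z = f Z := by
  simp [BS, splitsN_one_aux, braceRHSword]

theorem BS_cons (M : R → List R → R) (f : List R → R) (x : R) (X Z : List R) :
    BS M f (x :: X) Z = ((splits Z).map fun p => ((splits p.2).map fun q =>
      BS M (fun w => f (p.1 ++ M x q.1 :: w)) X q.2).sum).sum := by
  have : 2 * (x :: X).length + 1 = (2 * X.length + 1) + 1 + 1 := by simp; ring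
  unfold BS
  rw [this, splitsN]
  simp only [sum_map_flatMap_aux, List.map_map, Function.comp_def]
  congr 1
  apply List.map_congr_left
  intro p _
  rw [splitsN]
  simp only [sum_map_flatMap_aux, List.map_map, Function.comp_def, braceRHSword]

theorem BS_cons_nil (M : R → List R → R) (f : List R → R) (x : R) (X : List R) :
    BS M f (x :: X) [] = BS M (fun w => f (M x [] :: w)) X [] := by
  simp [BS_cons, splits_nil_aux]

theorem BS_cons_cons (M : R → List R → R) (f : List R → R) (x z : R) (X Z : List R) :
    BS M f (x :: X) (z :: Z) = BS M (fun w => f (z :: w)) (x :: X) Z +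
      ((splits (z :: Z)).map fun q => BS M (fun w => f (M x q.1 :: w)) X q.2).sum := by
  rw [BS_cons, BS_cons, splits_cons_aux z Z]
  simp only [List.map_cons, List.sum_cons, List.map_map, Function.comp_def, List.nil_append,
    List.cons_append, splits_cons_aux]
  abel

theorem sum_splits_short {α : Type*} (l : List α) (g : List α × List α → R)
    (hg : ∀ a b p r, g (a :: b :: p, r) = 0) (a : α) :
    ((splits (a :: l)).map g).sum = g ([], a :: l) + g ([a], l) := by
  rw [splits_cons_aux]
  cases l with
  | nil => simp [splits_nil_aux]
  | cons b l => simp [splits_cons_aux, Function.comp_def, hg]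

theorem sum_Mext_nil (M : R → List R → R) (f : List R → R) (hf : ∀ p s, f (p ++ 0 :: s) = 0)
    (N : ℕ) (X : List R) (z : R) (Z : List R) :
    ((splits (z :: Z)).map fun q => SN M (fun w => f (Mext M [] q.1 :: w)) N X q.2).sum
      = SN M (fun w => f (z :: w)) N X Z := by
  have h0 : ∀ w, f (0 :: w) = 0 := fun w => hf [] w
  rw [sum_splits_short]
  · simp [Mext, h0, SN_zero_fun]
  · intro a b p r
    simp [Mext, h0, SN_zero_fun]

theorem SN_eq_BS (M : R → List R → R) (N : ℕ) : ∀ (f : List R → R)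
    (_ : ∀ p s, f (p ++ 0 :: s) = 0) (X Z : List R) (_ : X.length + Z.length < N),
    SN M f N X Z = BS M f X Z := by
  induction N with
  | zero => intro f _ X Z h; omega
  | succ N ih =>
    intro f hf X Z hlen
    have h0 : ∀ w, f (0 :: w) = 0 := fun w => hf [] w
    have hf' : ∀ a, ∀ p s, (fun w => f (a :: w)) (p ++ 0 :: s) = 0 :=
      fun a p s => hf (a :: p) s
    have key : ∀ (x : R) (X' : List R), X'.length + Z.length < N →
        ((splits Z).map fun q => SN M (fun w => f (Mext M [x] q.1 :: w)) N X' q.2).sum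
        = ((splits Z).map fun q => BS M (fun w => f (M x q.1 :: w)) X' q.2).sum := by
      intro x X' hl
      congr 1
      apply List.map_congr_left
      intro q hq
      have := length_of_mem_splits _ _ hq
      simp only [Mext]
      exact ih _ (hf' _) _ _ (by omega)
    rw [SN_succ]
    cases X with
    | nil =>
      cases Z with
      | nil => simp [BS_nil, splits_nil_aux, Fk, splitsN, Mext, h0, SN_zero_fun]
      | cons z Z =>
        rw [splits_nil_aux]
        simp only [List.map_cons, List.map_nil, List.sum_cons, List.sum_nil]
        rw [sum_Mext_nil M f hf, ih _ (hf' z) _ _ (by simp at hlen ⊢; omega)]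
        simp [BS_nil, Fk, splitsN]
    | cons x X =>
      rw [sum_splits_short]
      · simp only
        rw [key x X (by simp at hlen; omega)]
        cases Z with
        | nil => simp [BS_cons_nil, splits_nil_aux, Fk, splitsN, Mext, h0, SN_zero_fun]
        | cons z Z =>
          rw [sum_Mext_nil M f hf, ih _ (hf' z) _ _ (by simp at hlen ⊢; omega), BS_cons_cons]
          simp [Fk, splitsN]
      · intro a b p r
        simp only [Mext, h0, SN_zero_fun, sum_map_zero_aux]

theorem starSum_eq_SN (M : R → List R → R) (f : List R → R) (X Z : List R) :
    ((starWords M X Z).map f).sum = SN M f (X.length + Z.length + 1) X Z := by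
  have gen : (X ≠ [] ∨ Z ≠ []) → Fk M f 0 X Z = 0 := by
    rintro (h | h) <;> simp [Fk, splitsN, h, sum_map_zero_aux]
  have main : Fk M f 0 X Z = 0 → (((List.range (X.length + Z.length)).flatMap fun k =>
      (splitsN (k + 1) X).flatMap fun Xs =>
        (splitsN (k + 1) Z).map fun Ys => List.zipWith (Mext M) Xs Ys).map f).sum
      = SN M f (X.length + Z.length + 1) X Z := by
    intro h
    simp only [SN, List.range_succ_eq_map, List.map_cons, List.sum_cons, h, zero_add,
      List.map_map, Function.comp_def, sum_map_flatMap_aux, Nat.succ_eq_add_one]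
    rfl
  cases X with
  | nil =>
    cases Z with
    | nil => simp [starWords, SN, Fk, splitsN]
    | cons z Z => exact main (gen (by simp))
  | cons x X => exact main (gen (by simp))

end helpers

/-- Let `R` be a vector space with multilinear operations
`M_{1q} : R × R^q → R` (`q ≥ 0`, `M_{10} = id`), extended to words by the stated
conventions, and let `⋆` be the Loday–Ronco product on `T(R)`. Then the
operations satisfy the brace relation if and only if
`M(M(X;Y);Z) = M(X; Y ⋆ Z)` for every letter `X ∈ R` and all words `Y, Z ∈ T(R)`
(the right-hand side being `M(X;·)` applied, by multilinearity, to the sum of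
words `Y ⋆ Z`). -/
theorem braceRel_iff_brace_of_star
    (K : Type*) [Field K] {R : Type*} [AddCommGroup R] [Module K R]
    (M : R → List R → R)
    (hM0 : ∀ x : R, M x [] = x)
    (hadd₁ : ∀ (a b : R) (ys : List R), M (a + b) ys = M a ys + M b ys)
    (hsmul₁ : ∀ (c : K) (a : R) (ys : List R), M (c • a) ys = c • M a ys)
    (hadd₂ : ∀ (x : R) (p s : List R) (a b : R),
      M x (p ++ (a + b) :: s) = M x (p ++ a :: s) + M x (p ++ b :: s))
    (hsmul₂ : ∀ (x : R) (p s : List R) (c : K) (a : R),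
      M x (p ++ (c • a) :: s) = c • M x (p ++ a :: s)) :
    BraceRel M ↔
      ∀ (x : R) (Y Z : List R),
        M (M x Y) Z = ((starWords M Y Z).map fun w => M x w).sum := by
  have key : ∀ (x : R) (Y Z : List R), ((starWords M Y Z).map fun w => M x w).sum =
      ((splitsN (2 * Y.length + 1) Z).map fun Zs => M x (braceRHSword M Zs Y)).sum := by
    intro x Y Z
    rw [starSum_eq_SN, SN_eq_BS M _ (fun w => M x w) _ _ _ (Nat.lt_succ_self _)]
    · rfl
    · intro p s
      have := hsmul₂ x p s 0 0
      simpa using this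
  unfold BraceRel
  simp only [key]
end

section
/- Let R be a brace algebra and ⋆ the Loday–Ronco product on T(R). For all n, m ≥ 1 and letters x_i, y_j ∈ R: (x_1⋯x_n) ⋆ (y_1⋯y_m) = [(x_1⋯x_{n−1}) ⋆ (y_1⋯y_m)]·x_n + [(x_1⋯x_n) ⋆ (y_1⋯y_{m−1})]·y_m + Σ_{i=0}^{m−1} [(x_1⋯x_{n−1}) ⋆ (y_1⋯y_i)]·M_{1,m−i}(x_n; y_{i+1}⋯y_m), where juxtaposition denotes concatenation and empty words are treated as 1 (with 1 ⋆ Z = Z ⋆ 1 = Z). -/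
namespace LRaux

/-- Sum of `F a b` over all factorizations `l = a ++ b`. -/
def sg {α A : Type*} [AddCommMonoid A] : List α → (List α → List α → A) → A
  | [], F => F [] []
  | a :: l, F => F [] (a :: l) + sg l (fun p s => F (a :: p) s)

section
variable {α A : Type*}

theorem sg_congr [AddCommMonoid A] (l : List α) (F G : List α → List α → A)
    (h : ∀ a b, a ++ b = l → F a b = G a b) : sg l F = sg l G := by
  induction l generalizing F G with
  | nil => exact h [] [] rfl
  | cons x l ih =>
    simp only [sg]
    rw [h [] (x :: l) rfl, ih _ (fun p s => G (x :: p) s)]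
    intro a b hab
    exact h _ _ (by simp [hab])

theorem sg_add [AddCommMonoid A] (l : List α) (F G : List α → List α → A) :
    sg l (fun a b => F a b + G a b) = sg l F + sg l G := by
  induction l generalizing F G with
  | nil => rfl
  | cons x l ih =>
    simp only [sg]
    rw [ih]
    abel

theorem sg_zero [AddCommMonoid A] (l : List α) :
    sg l (fun _ _ => (0 : A)) = 0 := by
  induction l with
  | nil => rfl
  | cons x l ih => simp only [sg, ih, add_zero]

theorem sg_eq_zero [AddCommMonoid A] (l : List α) (F : List α → List α → A)
    (h : ∀ a b, a ++ b = l → F a b = 0) : sg l F = 0 := by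
  rw [sg_congr l F (fun _ _ => 0) h, sg_zero]

theorem sg_sum [AddCommMonoid A] {ι : Type*} (s : Finset ι) (l : List α)
    (F : ι → List α → List α → A) :
    sg l (fun a b => ∑ i ∈ s, F i a b) = ∑ i ∈ s, sg l (F i) := by
  classical
  induction s using Finset.induction_on with
  | empty => simp [sg_zero]
  | insert i s hi ih => simp only [Finset.sum_insert hi, sg_add, ih]

theorem sg_mul [Semiring A] (l : List α) (F : List α → List α → A) (c : A) :
    sg l (fun a b => F a b * c) = sg l F * c := by
  induction l generalizing F with
  | nil => rfl
  | cons x l ih => simp only [sg, ih, add_mul]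

theorem mul_sg [Semiring A] (l : List α) (F : List α → List α → A) (c : A) :
    sg l (fun a b => c * F a b) = c * sg l F := by
  induction l generalizing F with
  | nil => rfl
  | cons x l ih => simp only [sg, ih, mul_add]

theorem sg_comm [AddCommMonoid A] (l m : List α)
    (F : List α → List α → List α → List α → A) :
    sg l (fun a b => sg m (fun c d => F a b c d)) =
      sg m (fun c d => sg l (fun a b => F a b c d)) := by
  induction l generalizing F with
  | nil => rfl
  | cons x l ih => simp only [sg, sg_add, ih]

theorem sg_assoc [AddCommMonoid A] (l : List α) (F : List α → List α → List α → A) :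
    sg l (fun a b => sg b (fun c d => F a c d)) =
      sg l (fun a b => sg a (fun c d => F c d b)) := by
  induction l generalizing F with
  | nil => rfl
  | cons x l ih => simp only [sg, sg_add, ih, add_assoc]

theorem sg_snoc [AddCommMonoid A] (l : List α) (x : α) (F : List α → List α → A) :
    sg (l ++ [x]) F = sg l (fun a b => F a (b ++ [x])) + F (l ++ [x]) [] := by
  induction l generalizing F with
  | nil => simp [sg]
  | cons y l ih => simp only [sg, List.cons_append, ih, add_assoc]

theorem sg_left [AddCommMonoid A] (l : List α) (F : List α → List α → A)
    (h : ∀ a b, a ≠ [] → F a b = 0) : sg l F = F [] l := by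
  cases l with
  | nil => rfl
  | cons x l =>
    simp only [sg]
    rw [sg_eq_zero, add_zero]
    intro a b _
    exact h _ _ (by simp)

theorem sg_right [AddCommMonoid A] (l : List α) (F : List α → List α → A)
    (h : ∀ a b, b ≠ [] → F a b = 0) : sg l F = F l [] := by
  induction l using List.reverseRecOn with
  | nil => rfl
  | append_singleton l x _ =>
    rw [sg_snoc, sg_eq_zero, zero_add]
    intro a b _
    exact h _ _ (by simp)

theorem sg_range [AddCommMonoid A] (l : List α) (F : List α → List α → A) :
    sg l F = ∑ i ∈ Finset.range (l.length + 1), F (l.take i) (l.drop i) := by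
  induction l generalizing F with
  | nil => simp [sg]
  | cons x l ih =>
    rw [List.length_cons, Finset.sum_range_succ']
    simp only [sg, ih, List.take_succ_cons, List.drop_succ_cons, List.take_zero, List.drop_zero]
    exact add_comm _ _

theorem list_sum_range [AddCommMonoid A] (n : ℕ) (f : ℕ → A) :
    ((List.range n).map f).sum = ∑ i ∈ Finset.range n, f i := by
  induction n with
  | zero => simp
  | succ n ih => simp [List.range_succ, Finset.sum_range_succ, ih]

theorem sg_splits [AddCommMonoid A] (l : List α) (F : List α → List α → A) :
    ((splits l).map fun p => F p.1 p.2).sum = sg l F := by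
  rw [sg_range, ← list_sum_range]
  simp only [splits, List.map_map, Function.comp_def]

theorem sum_splitsN_succ [AddCommMonoid A] (k : ℕ) (l : List α) (F : List (List α) → A) :
    ((splitsN (k + 1) l).map F).sum =
      sg l (fun a b => ((splitsN k b).map fun r => F (a :: r)).sum) := by
  rw [← sg_splits]
  simp only [splitsN, List.map_flatten, List.map_map, Function.comp_def, List.flatMap_def,
    List.sum_flatten]

theorem sum_map_sg [AddCommMonoid A] {β : Type*} (L : List β) (l : List α)
    (F : β → List α → List α → A) :
    (L.map fun r => sg l (F r)).sum = sg l (fun a b => (L.map fun r => F r a b).sum) := by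
  induction L with
  | nil => simp [sg_zero]
  | cons r L ih => simp only [List.map_cons, List.sum_cons, ih, sg_add]

end

section
variable (K : Type*) [Field K] {R : Type*} [AddCommGroup R] [Module K R]

/-- The part of the product coming from factorizations into exactly `k` factors. -/
noncomputable def S (M : R → List R → R) : ℕ → List R → List R → TensorAlgebra K R
  | 0, [], [] => 1
  | 0, _, _ => 0
  | k + 1, X, Y => sg X fun a b => sg Y fun c d =>
      TensorAlgebra.ι K (Mext M a c) * S M k b d

theorem S_zero_left (M : R → List R → R) (X Y : List R) (h : X ≠ []) : S K M 0 X Y = 0 := by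
  cases X with
  | nil => exact absurd rfl h
  | cons x X => simp [S]

theorem S_zero_right (M : R → List R → R) (X Y : List R) (h : Y ≠ []) : S K M 0 X Y = 0 := by
  cases Y with
  | nil => exact absurd rfl h
  | cons x Y => cases X <;> simp [S]

theorem sum_splitsN (M : R → List R → R) (k : ℕ) (X Y : List R) :
    ((splitsN k X).map fun Xs => ((splitsN k Y).map fun Ys =>
      wd K (List.zipWith (Mext M) Xs Ys)).sum).sum = S K M k X Y := by
  induction k generalizing X Y with
  | zero => cases X <;> cases Y <;> simp [splitsN, S, wd]
  | succ k ih =>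
    rw [sum_splitsN_succ]
    simp only [S]
    congr 1
    funext a b
    simp only [sum_splitsN_succ]
    rw [sum_map_sg]
    congr 1
    funext c d
    rw [← ih]
    simp [wd, List.sum_map_mul_left]

theorem S_right (M : R → List R → R) (k : ℕ) (X Y : List R) :
    S K M (k + 1) X Y = sg X fun a b => sg Y fun c d =>
      S K M k a c * TensorAlgebra.ι K (Mext M b d) := by
  induction k generalizing X Y with
  | zero =>
    rw [S, sg_right, sg_right, sg_left, sg_left]
    · simp [S]
    · intro a b h; simp [S_zero_right K M _ _ h]
    · intro a b h
      apply sg_eq_zero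
      intro c d _
      simp [S_zero_left K M _ _ h]
    · intro a b h; simp [S_zero_right K M _ _ h]
    · intro a b h
      apply sg_eq_zero
      intro c d _
      simp [S_zero_left K M _ _ h]
  | succ k ih =>
    rw [S]
    conv_lhs => simp only [ih]
    conv_rhs => simp only [S]
    simp only [← mul_sg, ← sg_mul]
    have e1 : ∀ a b : List R, (sg Y fun c d => sg b fun a' b' => sg d fun c' d' =>
        TensorAlgebra.ι K (Mext M a c) *
          (S K M k a' c' * TensorAlgebra.ι K (Mext M b' d'))) =
        sg b fun a' b' => sg Y fun c d => sg d fun c' d' =>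
        TensorAlgebra.ι K (Mext M a c) *
          (S K M k a' c' * TensorAlgebra.ι K (Mext M b' d')) := fun a b => sg_comm _ _ _
    simp only [e1]
    rw [sg_assoc X (fun a a' b' => sg Y fun c d => sg d fun c' d' =>
        TensorAlgebra.ι K (Mext M a c) *
          (S K M k a' c' * TensorAlgebra.ι K (Mext M b' d')))]
    congr 1
    funext a b
    rw [sg_comm Y a]
    congr 1
    funext a' b'
    rw [sg_assoc Y (fun c c' d' => TensorAlgebra.ι K (Mext M a' c) *
          (S K M k b' c' * TensorAlgebra.ι K (Mext M b d')))]
    simp only [mul_assoc]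

theorem S_vanish (M : R → List R → R) (k : ℕ) (X Y : List R)
    (h : X.length + Y.length < k) : S K M k X Y = 0 := by
  induction k generalizing X Y with
  | zero => omega
  | succ k ih =>
    rw [S]
    apply sg_eq_zero
    intro a b hab
    apply sg_eq_zero
    intro c d hcd
    subst hab hcd
    by_cases h0 : a = [] ∧ c = []
    · obtain ⟨rfl, rfl⟩ := h0
      simp [Mext]
    · rw [ih, mul_zero]
      have : 0 < a.length + c.length := by
        rcases a with _ | _ <;> rcases c with _ | _ <;> simp_all
      simp only [List.length_append] at h
      omega

theorem star_eq (M : R → List R → R) (X Y : List R) (N : ℕ)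
    (h : X.length + Y.length ≤ N) :
    starW K M X Y = ∑ k ∈ Finset.range (N + 1), S K M k X Y := by
  have h1 : starW K M X Y = ∑ k ∈ Finset.range (X.length + Y.length + 1), S K M k X Y := by
    by_cases h0 : X = [] ∧ Y = []
    · obtain ⟨rfl, rfl⟩ := h0
      simp [starW, starWords, S, wd]
    · have hs : starWords M X Y = (List.range (X.length + Y.length)).flatMap fun k =>
        (splitsN (k + 1) X).flatMap fun Xs =>
        (splitsN (k + 1) Y).map fun Ys => List.zipWith (Mext M) Xs Ys := by
        rw [starWords]
        intro a b
        exact h0 ⟨a, b⟩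
      have hz : S K M 0 X Y = 0 := by
        by_cases hX : X = []
        · exact S_zero_right K M _ _ (fun hY => h0 ⟨hX, hY⟩)
        · exact S_zero_left K M _ _ hX
      rw [Finset.sum_range_succ', hz, add_zero, starW, hs]
      simp only [← sum_splitsN, List.map_flatten, List.map_map, Function.comp_def,
        List.flatMap_def, List.sum_flatten]
      rw [list_sum_range]
  rw [h1]
  apply Finset.sum_subset
  · intro i; simp only [Finset.mem_range]; omega
  · intro i _ hi
    apply S_vanish
    simp only [Finset.mem_range] at hi
    omega

theorem star_sg (M : R → List R → R) (X Y : List R) (hX : X ≠ []) :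
    starW K M X Y = sg X fun a b => sg Y fun c d =>
      starW K M a c * TensorAlgebra.ι K (Mext M b d) := by
  rw [star_eq K M X Y (X.length + Y.length + 1) (by omega), Finset.sum_range_succ',
    S_zero_left K M X Y hX, add_zero]
  simp only [S_right, ← sg_sum]
  apply sg_congr
  intro a b hab
  apply sg_congr
  intro c d hcd
  rw [star_eq K M a c (X.length + Y.length), Finset.sum_mul]
  subst hab hcd
  simp only [List.length_append]
  omega

end

end LRaux

/-- Let `R` be a brace algebra and `⋆` the Loday–Ronco product on
`T(R)`. For all `n, m ≥ 1` and letters `xᵢ, yⱼ ∈ R` (here `X = x₁⋯x_{n-1}`,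
`Y = y₁⋯y_{m-1}`, `x = xₙ`, `y = y_m`):
`(x₁⋯xₙ) ⋆ (y₁⋯y_m) = [(x₁⋯x_{n−1}) ⋆ (y₁⋯y_m)]·xₙ + [(x₁⋯xₙ) ⋆ (y₁⋯y_{m−1})]·y_m
  + Σ_{i=0}^{m−1} [(x₁⋯x_{n−1}) ⋆ (y₁⋯yᵢ)]·M_{1,m−i}(xₙ; y_{i+1}⋯y_m)`,
empty words being treated as `1` (with `1 ⋆ Z = Z ⋆ 1 = Z`). -/
theorem star_recursive_formula
    (K : Type*) [Field K] {R : Type*} [AddCommGroup R] [Module K R]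
    (M : R → List R → R)
    (hM0 : ∀ x : R, M x [] = x)
    (hadd₁ : ∀ (a b : R) (ys : List R), M (a + b) ys = M a ys + M b ys)
    (hsmul₁ : ∀ (c : K) (a : R) (ys : List R), M (c • a) ys = c • M a ys)
    (hadd₂ : ∀ (x : R) (p s : List R) (a b : R),
      M x (p ++ (a + b) :: s) = M x (p ++ a :: s) + M x (p ++ b :: s))
    (hsmul₂ : ∀ (x : R) (p s : List R) (c : K) (a : R),
      M x (p ++ (c • a) :: s) = c • M x (p ++ a :: s))
    (hbrace : BraceRel M) :
    ∀ (xs ys : List R) (x y : R),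
      starW K M (xs ++ [x]) (ys ++ [y]) =
        starW K M xs (ys ++ [y]) * TensorAlgebra.ι K x +
        starW K M (xs ++ [x]) ys * TensorAlgebra.ι K y +
        ∑ i ∈ Finset.range (ys.length + 1),
          starW K M xs ((ys ++ [y]).take i) *
            TensorAlgebra.ι K (M x ((ys ++ [y]).drop i)) := by
  intro xs ys x y
  rw [LRaux.star_sg K M _ _ (by simp), LRaux.sg_snoc, LRaux.sg_right]
  · have e1 : (LRaux.sg (ys ++ [y]) fun c d => starW K M (xs ++ [x]) c *
        TensorAlgebra.ι K (Mext M [] d)) =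
        starW K M (xs ++ [x]) ys * TensorAlgebra.ι K y := by
      rw [LRaux.sg_snoc, LRaux.sg_right]
      · simp [Mext]
      · intro a b hb
        rcases b with _ | ⟨b1, _ | ⟨b2, b⟩⟩
        · exact absurd rfl hb
        · simp [Mext]
        · simp [Mext]
    have e2 : (LRaux.sg (ys ++ [y]) fun c d => starW K M xs c *
        TensorAlgebra.ι K (Mext M ([] ++ [x]) d)) =
        ∑ i ∈ Finset.range (ys.length + 1), starW K M xs ((ys ++ [y]).take i) *
            TensorAlgebra.ι K (M x ((ys ++ [y]).drop i)) +
        starW K M xs (ys ++ [y]) * TensorAlgebra.ι K x := by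
      have hm : ∀ d, Mext M ([] ++ [x]) d = M x d := fun d => by
        cases d <;> simp [Mext]
      simp only [hm]
      have hl : (ys ++ [y]).length = ys.length + 1 := by simp
      rw [LRaux.sg_range, Finset.sum_range_succ, List.take_length, List.drop_length, hM0, hl]
    rw [e1, e2]
    abel
  · intro a b hb
    apply LRaux.sg_eq_zero
    intro c d _
    rcases b with _ | ⟨b1, _ | ⟨b2, b⟩⟩
    · exact absurd rfl hb
    · simp [Mext]
    · simp [Mext]
end

section
/- Let R be a K-vector space and let M be the operation on R-decorated planar rooted trees defined recursively by M(B_+^x(f_1); f_2) = B_+^x(f_1 ⋆ f_2). Then M satisfies the brace identity M(M(t; f_2); f_3) = M(t; f_2 ⋆ f_3) for every decorated tree t and all decorated forests f_2, f_3; consequently R^𝒯, with the operations M_{1q}(t; s_1⋯s_q) = M(t; s_1⋯s_q), is a brace algebra. -/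
/-! Common setup: `R`-decorated planar rooted trees, decorated forests,
the free module `R^𝒯` they span, and the Loday–Ronco product on `T(R^𝒯)`
induced by the recursive brace operation `M(B₊ˣ(f₁); f₂) = B₊ˣ(f₁ ⋆ f₂)`. -/

/-- Planar rooted trees with vertices decorated by elements of `R`. -/
inductive PTree (R : Type*) : Type _
  | node : R → List (PTree R) → PTree R

section

variable (K : Type*) [Field K]
variable {R : Type*}

/-- Decorated forests: words of decorated trees. -/
abbrev Forest (R : Type*) := List (PTree R)

/-- `B₊ˣ` : grafting of a decorated forest onto a new root decorated by `x`. -/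
def Bplus (x : R) (f : Forest R) : PTree R := PTree.node x f

variable (R)

/-- The space `R^𝒯` spanned by the decorated trees. -/
abbrev TreeMod := PTree R →₀ K

/-- The space `T(R^𝒯)` of decorated forests. -/
abbrev ForestMod := Forest R →₀ K

variable {R K}

/-- The element of `T(R^𝒯)` obtained from a word whose letters are linear
combinations of decorated trees, expanding multilinearly (in particular a word
containing the letter `0` gives `0`). -/
noncomputable def wordOf : List (TreeMod K R) → ForestMod K R
  | [] => Finsupp.single ([] : Forest R) 1
  | a :: rest => a.sum fun t c => c • Finsupp.mapDomain (List.cons t) (wordOf rest)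

/-- Extension `M(F;G)` of the brace operation to pairs of forests:
`M(1;1) = 0`, `M(1;s) = s` and `M(t;G) = M(t;G)` for a single tree `t`
(so `M(t;1) = t`), `M(F;G) = 0` if `F` has more than one tree. -/
noncomputable def MextF (Mh : PTree R → Forest R → TreeMod K R) : Forest R → Forest R → TreeMod K R
  | [], [] => 0
  | [], [s] => Finsupp.single s 1
  | [], _ :: _ :: _ => 0
  | [t], ys => Mh t ys
  | _ :: _ :: _, _ => 0

/-- The Loday–Ronco product `X ⋆ Y = Σ_{k≥1} Σ_{X=X¹⋯X^k, Y=Y¹⋯Y^k}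
M(X¹;Y¹)⋯M(X^k;Y^k)` built from a brace operation `Mh` on decorated trees
(with `1 ⋆ 1 = 1`; the terms with `k > |X| + |Y|` vanish, each containing the
letter `M(1;1) = 0`). -/
noncomputable def starRHS (Mh : PTree R → Forest R → TreeMod K R) : Forest R → Forest R → ForestMod K R
  | [], [] => Finsupp.single ([] : Forest R) 1
  | X, Y =>
    ((List.range (X.length + Y.length)).flatMap fun k =>
      (splitsN (k + 1) X).flatMap fun Xs =>
        (splitsN (k + 1) Y).map fun Ys =>
          wordOf (List.zipWith (MextF Mh) Xs Ys)).sum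

/-- `Mh` and `star` satisfy the defining recursion of the brace operation on
decorated trees: `M(B₊ˣ(f₁); f₂) = B₊ˣ(f₁ ⋆ f₂)` (with `B₊ˣ` extended linearly),
where `⋆` is the Loday–Ronco product built from `Mh`. -/
def IsTreeBrace (Mh : PTree R → Forest R → TreeMod K R)
    (star : Forest R → Forest R → ForestMod K R) : Prop :=
  (∀ (x : R) (f₁ f₂ : Forest R),
      Mh (Bplus x f₁) f₂ = Finsupp.mapDomain (Bplus x) (star f₁ f₂)) ∧
  (∀ X Y : Forest R, star X Y = starRHS Mh X Y)

end

section

variable {K : Type*} [Field K] {R : Type*}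

/-- The list of letters (each a linear combination of decorated trees) of the word
`z₁ ⋯ {y₁; z_{k₁},…} ⋯ {yₙ; z_{kₙ},…} ⋯ z_m` on the right-hand side of the brace
relation, for a factorization `Zs = P₀B₁P₁⋯BₙPₙ` of `zs` into `2n+1` consecutive
(possibly empty) blocks. -/
noncomputable def braceWordT (Mh : PTree R → Forest R → TreeMod K R) :
    List (Forest R) → Forest R → List (TreeMod K R)
  | [P], [] => P.map fun s => Finsupp.single s 1
  | P :: B :: rest, y :: ys =>
      (P.map fun s => Finsupp.single s 1) ++ Mh y B :: braceWordT Mh rest ys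
  | _, _ => []

section helpers

variable {ι κ : Type*} {W : Type*} [AddCommGroup W] [Module K W]

/-- Linear extension of `φ`, applied to `x`. -/
noncomputable def bd (x : ι →₀ K) (φ : ι → W) : W := x.sum fun i c => c • φ i

/-- Sum over all splittings of a list. -/
def D {α : Type*} : List α → (List α → List α → W) → W
  | [], φ => φ [] []
  | a :: l, φ => φ [] (a :: l) + D l (fun p q => φ (a :: p) q)

theorem bd_zero (φ : ι → W) : bd (0 : ι →₀ K) φ = 0 := Finsupp.sum_zero_index

theorem bd_zero_fun (x : ι →₀ K) : bd x (fun _ => (0 : W)) = 0 := by simp [bd]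

theorem bd_single (i : ι) (φ : ι → W) : bd (Finsupp.single i (1 : K)) φ = φ i := by
  simp [bd]

theorem bd_add (x y : ι →₀ K) (φ : ι → W) : bd (x + y) φ = bd x φ + bd y φ := by
  unfold bd
  exact Finsupp.sum_add_index' (by simp) (by intros; rw [add_smul])

theorem bd_smul (c : K) (x : ι →₀ K) (φ : ι → W) : bd (c • x) φ = c • bd x φ := by
  unfold bd
  rw [Finsupp.sum_smul_index (by simp), Finsupp.smul_sum]
  simp only [mul_smul]

theorem bd_add_fun (x : ι →₀ K) (φ ψ : ι → W) :
    bd x (fun i => φ i + ψ i) = bd x φ + bd x ψ := by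
  simp [bd, smul_add]

theorem bd_smul_fun (x : ι →₀ K) (c : K) (φ : ι → W) :
    bd x (fun i => c • φ i) = c • bd x φ := by
  unfold bd
  rw [Finsupp.smul_sum]
  simp only [smul_comm c]

theorem bd_self (x : ι →₀ K) : bd x (fun i => Finsupp.single i (1 : K)) = x := by
  simp [bd]

theorem bd_mapDomain (f : ι → κ) (x : ι →₀ K) (φ : κ → W) :
    bd (Finsupp.mapDomain f x) φ = bd x (fun i => φ (f i)) := by
  unfold bd
  exact Finsupp.sum_mapDomain_index (by simp) (by intros; rw [add_smul])

theorem bd_sum_list {β : Type*} (l : List β) (f : β → ι →₀ K) (φ : ι → W) :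
    bd ((l.map f).sum) φ = (l.map fun b => bd (f b) φ).sum := by
  induction l with
  | nil => simp [bd_zero]
  | cons a l ih => simp [bd_add, ih]

theorem bd_fun_sum_list {β : Type*} (x : ι →₀ K) (l : List β) (f : β → ι → W) :
    bd x (fun i => (l.map fun b => f b i).sum) = (l.map fun b => bd x (f b)).sum := by
  induction l with
  | nil => simp [bd_zero_fun]
  | cons a l ih => simp [bd_add_fun, ih]

theorem bd_bd (x : ι →₀ K) (f : ι → κ →₀ K) (φ : κ → W) :
    bd (bd x f) φ = bd x (fun i => bd (f i) φ) := by
  induction x using Finsupp.induction_linear with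
  | zero => simp [bd_zero]
  | add x y hx hy => rw [bd_add, bd_add, bd_add, hx, hy]
  | single i c =>
    have : Finsupp.single i c = c • Finsupp.single i (1 : K) := by simp
    rw [this, bd_smul, bd_smul, bd_smul, bd_single, bd_single]

theorem bd_comm (x : ι →₀ K) (y : κ →₀ K) (φ : ι → κ → W) :
    bd x (fun i => bd y (φ i)) = bd y (fun j => bd x (fun i => φ i j)) := by
  induction x using Finsupp.induction_linear with
  | zero => simp [bd_zero, bd_zero_fun]
  | add x y hx hy => simp only [bd_add, bd_add_fun, hx, hy]
  | single i c =>
    have : Finsupp.single i c = c • Finsupp.single i (1 : K) := by simp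
    simp only [this, bd_smul, bd_single, bd_smul_fun]

theorem D_congr {α : Type*} (l : List α) (φ ψ : List α → List α → W)
    (h : ∀ p q, p ++ q = l → φ p q = ψ p q) : D l φ = D l ψ := by
  induction l generalizing φ ψ with
  | nil => exact h _ _ rfl
  | cons a l ih =>
    simp only [D]
    rw [h [] (a :: l) rfl]
    congr 1
    exact ih _ _ fun p q hpq => h _ _ (by simp [hpq])

theorem D_zero {α : Type*} (l : List α) : D l (fun _ _ => (0 : W)) = 0 := by
  induction l with
  | nil => rfl
  | cons a l ih => simp [D, ih]

theorem D_add {α : Type*} (l : List α) (φ ψ : List α → List α → W) :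
    D l (fun p q => φ p q + ψ p q) = D l φ + D l ψ := by
  induction l generalizing φ ψ with
  | nil => rfl
  | cons a l ih => simp only [D, ih]; abel

theorem D_bd {α : Type*} (l : List α) (x : ι →₀ K) (φ : List α → List α → ι → W) :
    D l (fun p q => bd x (φ p q)) = bd x (fun i => D l (fun p q => φ p q i)) := by
  induction l generalizing φ with
  | nil => rfl
  | cons a l ih => simp only [D, ih, bd_add_fun]

theorem D_comm {α β : Type*} (l : List α) (m : List β)
    (φ : List α → List α → List β → List β → W) :
    D l (fun p q => D m (φ p q)) = D m (fun r s => D l (fun p q => φ p q r s)) := by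
  induction l generalizing φ with
  | nil => rfl
  | cons a l ih => simp only [D, ih, D_add]

theorem D_coassoc {α : Type*} (l : List α) (φ : List α → List α → List α → W) :
    D l (fun p q => D p (fun a b => φ a b q)) = D l (fun p q => D q (φ p)) := by
  induction l generalizing φ with
  | nil => rfl
  | cons a l ih => simp only [D, ih, D_add]; abel

theorem D_append {α : Type*} (A : List α) (t : α) (B : List α) (φ : List α → List α → W) :
    D (A ++ t :: B) φ = D A (fun p q => φ p (q ++ t :: B)) +
      D B (fun p q => φ (A ++ t :: p) q) := by
  induction A generalizing φ with
  | nil => rfl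
  | cons a A ih => simp only [D, List.cons_append, ih]; abel

theorem splits_sum {α : Type*} (l : List α) (φ : List α → List α → W) :
    ((splits l).map fun p => φ p.1 p.2).sum = D l φ := by
  induction l generalizing φ with
  | nil => simp [splits, D]
  | cons a l ih =>
    have h := ih (fun p q => φ (a :: p) q)
    simp only [D, ← h, splits, List.length_cons]
    rw [List.range_succ_eq_map (n := l.length + 1)]
    simp [List.map_map, Function.comp_def]

theorem sum_map_flatMap {β γ : Type*} (l : List β) (f : β → List γ) (g : γ → W) :
    ((l.flatMap f).map g).sum = (l.map fun b => ((f b).map g).sum).sum := by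
  induction l with
  | nil => simp
  | cons a l ih => simp [ih]

theorem splitsN_succ_sum {α : Type*} (k : ℕ) (l : List α) (g : List (List α) → W) :
    ((splitsN (k + 1) l).map g).sum =
      D l (fun p q => ((splitsN k q).map fun r => g (p :: r)).sum) := by
  simp only [splitsN]
  rw [sum_map_flatMap]
  simp only [List.map_map, Function.comp_def]
  exact splits_sum l (fun p q => ((splitsN k q).map fun r => g (p :: r)).sum)

theorem bd_wordOf_cons (a : TreeMod K R) (l : List (TreeMod K R)) (φ : Forest R → W) :
    bd (wordOf (a :: l)) φ = bd a (fun t => bd (wordOf l) (fun g => φ (t :: g))) := by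
  have : wordOf (a :: l) = bd a (fun t => Finsupp.mapDomain (List.cons t) (wordOf l)) := rfl
  rw [this, bd_bd]
  simp only [bd_mapDomain]

theorem bd_wordOf_append (P : Forest R) (l : List (TreeMod K R)) (φ : Forest R → W) :
    bd (wordOf ((P.map fun s => Finsupp.single s (1 : K)) ++ l)) φ =
      bd (wordOf l) (fun g => φ (P ++ g)) := by
  induction P generalizing φ with
  | nil => rfl
  | cons s P ih =>
    simp only [List.map_cons, List.cons_append, bd_wordOf_cons, bd_single, ih]

theorem sum_D {α β : Type*} (n : List β) (l : List α) (φ : β → List α → List α → W) :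
    (n.map fun k => D l (φ k)).sum = D l (fun p q => (n.map fun k => φ k p q).sum) := by
  induction n with
  | nil => simp [D_zero]
  | cons k n ih => simp only [List.map_cons, List.sum_cons, ih, D_add]

/-- The `k`-fold part of the Loday–Ronco product. -/
noncomputable def Sk (Mh : PTree R → Forest R → TreeMod K R) (k : ℕ) (X Y : Forest R)
    (φ : Forest R → W) : W :=
  ((splitsN k X).map fun Xs => ((splitsN k Y).map fun Ys =>
    bd (wordOf (List.zipWith (MextF Mh) Xs Ys)) φ).sum).sum

theorem Sk_succ (Mh : PTree R → Forest R → TreeMod K R) (k : ℕ) (X Y : Forest R)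
    (φ : Forest R → W) :
    Sk Mh (k + 1) X Y φ = D X (fun X1 X2 => D Y (fun Y1 Y2 =>
      bd (MextF Mh X1 Y1) (fun u => Sk Mh k X2 Y2 (fun g => φ (u :: g))))) := by
  unfold Sk
  rw [splitsN_succ_sum]
  congr 1; funext X1 X2
  simp only [splitsN_succ_sum]
  rw [sum_D]
  congr 1; funext Y1 Y2
  simp only [List.zipWith_cons_cons, bd_wordOf_cons, bd_fun_sum_list]

theorem Sk_zero (Mh : PTree R → Forest R → TreeMod K R) (X Y : Forest R)
    (φ : Forest R → W) :
    Sk Mh 0 X Y φ = if X = [] ∧ Y = [] then φ [] else 0 := by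
  unfold Sk
  cases X <;> cases Y <;> simp [splitsN, wordOf, bd_single]

theorem Sk_vanish (Mh : PTree R → Forest R → TreeMod K R) (k : ℕ) (X Y : Forest R)
    (φ : Forest R → W) (hk : X.length + Y.length < k) : Sk Mh k X Y φ = 0 := by
  induction k generalizing X Y φ with
  | zero => omega
  | succ k ih =>
    rw [Sk_succ]
    rw [← D_zero X]
    apply D_congr
    intro X1 X2 hX
    rw [← D_zero Y]
    apply D_congr
    intro Y1 Y2 hY
    by_cases h0 : X1 = [] ∧ Y1 = []
    · rw [h0.1, h0.2]; exact bd_zero _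
    · rw [← bd_zero_fun (MextF Mh X1 Y1)]
      congr 1; funext u
      apply ih
      subst hX hY
      simp only [List.length_append] at hk
      have : X1.length + Y1.length ≠ 0 := by
        intro h1
        apply h0
        constructor <;> apply List.eq_nil_of_length_eq_zero <;> omega
      omega

theorem bd_starRHS_aux (Mh : PTree R → Forest R → TreeMod K R) (X Y : Forest R)
    (φ : Forest R → W) : bd (starRHS Mh X Y) φ =
      ((List.range (X.length + Y.length + 1)).map fun k => Sk Mh k X Y φ).sum := by
  by_cases h0 : X = [] ∧ Y = []
  · obtain ⟨rfl, rfl⟩ := h0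
    simp [starRHS, bd_single, Sk_zero]
  · have h1 : starRHS Mh X Y = ((List.range (X.length + Y.length)).flatMap fun k =>
      (splitsN (k + 1) X).flatMap fun Xs =>
        (splitsN (k + 1) Y).map fun Ys =>
          wordOf (List.zipWith (MextF Mh) Xs Ys)).sum := by
      cases X <;> cases Y <;> first | rfl | simp at h0
    rw [h1, List.range_succ_eq_map]
    simp only [List.map_cons, List.sum_cons, Sk_zero, h0, if_false, zero_add]
    conv_lhs => rw [← List.map_id (List.flatMap _ _)]
    rw [sum_map_flatMap, bd_sum_list, List.map_map]
    congr 2; funext k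
    rw [sum_map_flatMap, bd_sum_list]
    simp only [List.map_map, bd_sum_list]
    rfl

theorem bd_starRHS_N (Mh : PTree R → Forest R → TreeMod K R) (X Y : Forest R)
    (φ : Forest R → W) (N : ℕ) (hN : X.length + Y.length < N) :
    ((List.range N).map fun k => Sk Mh k X Y φ).sum = bd (starRHS Mh X Y) φ := by
  induction N with
  | zero => omega
  | succ N ih =>
    by_cases h : X.length + Y.length < N
    · rw [List.range_succ]
      simp [ih h, Sk_vanish Mh N X Y φ h]
    · have : N = X.length + Y.length := by omega
      subst this
      rw [bd_starRHS_aux]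

theorem bd_starRHS (Mh : PTree R → Forest R → TreeMod K R) (X Y : Forest R)
    (φ : Forest R → W) : bd (starRHS Mh X Y) φ =
      (if X = [] ∧ Y = [] then φ [] else 0) + D X (fun X1 X2 => D Y (fun Y1 Y2 =>
      bd (MextF Mh X1 Y1) (fun u => bd (starRHS Mh X2 Y2) (fun g => φ (u :: g))))) := by
  rw [bd_starRHS_aux, List.range_succ_eq_map]
  simp only [List.map_cons, List.sum_cons, Sk_zero, List.map_map, Function.comp_def,
    Nat.succ_eq_add_one, Sk_succ]
  congr 1
  rw [sum_D]
  apply D_congr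
  intro X1 X2 hX
  rw [sum_D]
  apply D_congr
  intro Y1 Y2 hY
  by_cases h0 : X1 = [] ∧ Y1 = []
  · rw [h0.1, h0.2]; simp [MextF, bd_zero]
  · rw [← bd_fun_sum_list]
    congr 1; funext u
    apply bd_starRHS_N
    subst hX hY
    simp only [List.length_append]
    have : X1.length + Y1.length ≠ 0 := by
      intro h1
      apply h0
      constructor <;> apply List.eq_nil_of_length_eq_zero <;> omega
    omega

theorem D_Mext_nil (Mh : PTree R → Forest R → TreeMod K R) (s : PTree R) (Y : Forest R)
    (φ : Forest R → PTree R → W) :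
    D (s :: Y) (fun Y1 Y2 => bd (MextF Mh [] Y1) (φ Y2)) = φ Y s := by
  cases Y <;> simp [D, MextF, bd_zero, bd_single, D_zero]

theorem star_nil (Mh : PTree R → Forest R → TreeMod K R) (Y : Forest R)
    (φ : Forest R → W) : bd (starRHS Mh [] Y) φ = φ Y := by
  induction Y generalizing φ with
  | nil => simp [starRHS, bd_single]
  | cons s Y ih =>
    rw [bd_starRHS]
    have hD : ∀ f : Forest R → Forest R → W, D ([] : Forest R) f = f [] [] := fun _ => rfl
    rw [hD, D_Mext_nil (φ := fun Y2 u => bd (starRHS Mh [] Y2) (fun g => φ (u :: g))), ih]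
    simp

theorem star_cons_aux (Mh : PTree R → Forest R → TreeMod K R) (x : PTree R) (X Y : Forest R)
    (φ : Forest R → W) : bd (starRHS Mh (x :: X) Y) φ =
      D Y (fun Y1 Y2 => bd (MextF Mh [] Y1)
        (fun u => bd (starRHS Mh (x :: X) Y2) (fun g => φ (u :: g)))) +
      D Y (fun Y1 Y2 => bd (Mh x Y1)
        (fun u => bd (starRHS Mh X Y2) (fun g => φ (u :: g)))) := by
  rw [bd_starRHS]
  have h1 : ¬ (x :: X = [] ∧ Y = []) := by simp
  rw [if_neg h1, zero_add]
  cases X <;> simp [D, MextF, bd_zero, D_zero]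

theorem star_cons (Mh : PTree R → Forest R → TreeMod K R) (x : PTree R) (X Y : Forest R)
    (φ : Forest R → W) : bd (starRHS Mh (x :: X) Y) φ =
      D Y (fun P Q => D Q (fun B Q' => bd (Mh x B)
        (fun u => bd (starRHS Mh X Q') (fun g => φ (P ++ u :: g))))) := by
  induction Y generalizing φ with
  | nil =>
    rw [star_cons_aux]
    simp [D, MextF, bd_zero]
  | cons s Y ih =>
    rw [star_cons_aux]
    rw [D_Mext_nil (φ := fun Y2 u => bd (starRHS Mh (x :: X) Y2) (fun g => φ (u :: g)))]
    rw [ih, add_comm]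
    conv_rhs => rw [D]
    rfl

theorem D_four {α : Type*} (Z : List α) (Ψ : List α → List α → List α → List α → W) :
    D Z (fun Z1 Z2 => D Z1 (fun P Q => D Q (fun B Q' => Ψ P B Q' Z2))) =
      D Z (fun P V => D V (fun B V' => D V' (fun Q' Z2 => Ψ P B Q' Z2))) := by
  rw [D_coassoc Z (fun P Q Z2 => D Q (fun B Q' => Ψ P B Q' Z2))]
  congr 1; funext P V
  rw [D_coassoc V (fun B Q' Z2 => Ψ P B Q' Z2)]

theorem star_append (Mh : PTree R → Forest R → TreeMod K R) (A : Forest R) (t : PTree R)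
    (B Z : Forest R) (φ : Forest R → W) : bd (starRHS Mh (A ++ t :: B) Z) φ =
      D Z (fun Z1 Z' => D Z' (fun Z2 Z3 => bd (starRHS Mh A Z1) (fun a => bd (Mh t Z2)
        (fun u => bd (starRHS Mh B Z3) (fun b => φ (a ++ u :: b)))))) := by
  induction A generalizing Z φ with
  | nil => simp only [List.nil_append, star_nil]; exact star_cons _ _ _ _ _
  | cons x A ih =>
    simp only [List.cons_append, star_cons, ih]
    simp only [← D_bd]
    symm
    have e : ∀ Z1 Z' : Forest R, ∀ Ψ : Forest R → Forest R → Forest R → Forest R → Forest R → W,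
        D Z' (fun Z2 Z3 => D Z1 (fun P Q => D Q (fun B Q' => Ψ P B Q' Z2 Z3))) =
        D Z1 (fun P Q => D Q (fun B Q' => D Z' (fun Z2 Z3 => Ψ P B Q' Z2 Z3))) := by
      intro Z1 Z' Ψ
      rw [D_comm]
      congr 1; funext P Q
      rw [D_comm]
    refine Eq.trans (congrArg (D Z) (funext fun Z1 => funext fun Z' => e Z1 Z'
      (fun P B' Q' Z2 Z3 => bd (Mh x B') fun u => bd (starRHS Mh A Q') fun a => bd (Mh t Z2)
        fun v => bd (starRHS Mh B Z3) fun b => φ ((P ++ u :: a) ++ v :: b)))) ?_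
    rw [D_four]
    simp only [List.append_assoc, List.cons_append]

theorem D_star (Mh : PTree R → Forest R → TreeMod K R) (Y Z : Forest R)
    (φ : Forest R → Forest R → W) : bd (starRHS Mh Y Z) (fun g => D g φ) =
      D Y (fun Y1 Y2 => D Z (fun Z1 Z2 => bd (starRHS Mh Y1 Z1) (fun g =>
        bd (starRHS Mh Y2 Z2) (fun h => φ g h)))) := by
  induction Y generalizing Z φ with
  | nil => simp only [D, star_nil]
  | cons y Y ih =>
    rw [star_cons]
    simp only [D_append, bd_add_fun, D_add]
    conv_rhs => rw [D]
    simp only [star_nil, star_cons, ih]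
    simp only [← D_bd]
    congr 1
    · refine Eq.trans ?_ (D_coassoc Z (fun p q Q => D Q fun B Q' => bd (Mh y B) fun u =>
        bd (starRHS Mh Y Q') fun g => φ p (q ++ u :: g)))
      congr 1; funext P Q
      exact D_comm _ _ _
    · have e : ∀ Q : Forest R, ∀ F : Forest R → Forest R → Forest R → Forest R → W,
          D Q (fun B Q' => D Y (fun Y1 Y2 => F B Q' Y1 Y2)) =
          D Y (fun Y1 Y2 => D Q (fun B Q' => F B Q' Y1 Y2)) := fun Q F => D_comm _ _ _
      simp only [e]
      congr 1; funext Y1 Y2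
      symm
      exact D_four Z (fun P B Q' Z2 => bd (Mh y B) fun u => bd (starRHS Mh Y1 Q') fun g =>
        bd (starRHS Mh Y2 Z2) fun h => φ (P ++ u :: g) h)

theorem star_assoc (Mh : PTree R → Forest R → TreeMod K R) (X Y Z : Forest R)
    (hX : ∀ x ∈ X, ∀ (Y Z : Forest R) (φ : PTree R → W),
      bd (Mh x Y) (fun u => bd (Mh u Z) φ) = bd (starRHS Mh Y Z) (fun g => bd (Mh x g) φ))
    (φ : Forest R → W) :
    bd (starRHS Mh X Y) (fun g => bd (starRHS Mh g Z) φ) =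
      bd (starRHS Mh Y Z) (fun g => bd (starRHS Mh X g) φ) := by
  induction X generalizing Y Z φ with
  | nil => simp only [star_nil]
  | cons x X ih =>
    have ih' := fun Y Z φ => ih Y Z (fun y hy => hX y (List.mem_cons_of_mem _ hy)) φ
    have hx := hX x List.mem_cons_self
    simp only [star_cons, D_star, star_append]
    simp only [← D_bd]
    congr 1; funext Y1 Y'
    rw [D_comm]
    congr 1; funext Z1 Z'
    congr 1; funext Y2 Y3
    congr 1; funext Z2 Z3
    -- right-hand side
    have r : ∀ a : Forest R,
        bd (starRHS Mh Y2 Z2) (fun B => bd (starRHS Mh Y3 Z3) fun Q' => bd (Mh x B) fun v =>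
          bd (starRHS Mh X Q') fun b => φ (a ++ v :: b)) =
        bd (Mh x Y2) (fun u => bd (starRHS Mh X Y3) fun g => bd (Mh u Z2) fun v =>
          bd (starRHS Mh g Z3) fun b => φ (a ++ v :: b)) := by
      intro a
      have r1 : ∀ B : Forest R, (bd (starRHS Mh Y3 Z3) fun Q' => bd (Mh x B) fun v =>
          bd (starRHS Mh X Q') fun b => φ (a ++ v :: b)) =
          bd (Mh x B) fun v => bd (starRHS Mh X Y3) fun g => bd (starRHS Mh g Z3) fun b =>
            φ (a ++ v :: b) := by
        intro B
        rw [bd_comm]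
        congr 1; funext v
        exact (ih' _ _ _).symm
      simp only [r1]
      rw [← hx]
      congr 1; funext u
      exact bd_comm _ _ _
    refine Eq.trans ?_ (congrArg (bd (starRHS Mh Y1 Z1)) (funext fun a => (r a).symm))
    rw [bd_comm (starRHS Mh Y1 Z1)]
    congr 1; funext u
    exact bd_comm _ _ _

theorem brace_id (Mh : PTree R → Forest R → TreeMod K R)
    (h : ∀ (x : R) (f₁ f₂ : Forest R),
      Mh (Bplus x f₁) f₂ = Finsupp.mapDomain (Bplus x) (starRHS Mh f₁ f₂)) :
    ∀ (t : PTree R) (Y Z : Forest R) (φ : PTree R → W),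
      bd (Mh t Y) (fun u => bd (Mh u Z) φ) = bd (starRHS Mh Y Z) (fun g => bd (Mh t g) φ)
  | PTree.node x f, Y, Z, φ => by
    have hM : ∀ f g, ∀ ψ : PTree R → W, bd (Mh (Bplus x f) g) ψ =
        bd (starRHS Mh f g) (fun k => ψ (Bplus x k)) := by
      intro f g ψ
      rw [h, bd_mapDomain]
    change bd (Mh (Bplus x f) Y) _ = bd _ (fun g => bd (Mh (Bplus x f) g) φ)
    simp only [hM]
    exact star_assoc Mh f Y Z (fun y hy => brace_id Mh h y) _
  termination_by t => sizeOf t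
  decreasing_by
    have := List.sizeOf_lt_of_mem hy
    simp only [PTree.node.sizeOf_spec]
    omega

theorem brace_word (Mh : PTree R → Forest R → TreeMod K R) (ys zs : Forest R)
    (φ : Forest R → W) :
    ((splitsN (2 * ys.length + 1) zs).map fun Zs =>
      bd (wordOf (braceWordT Mh Zs ys)) φ).sum = bd (starRHS Mh ys zs) φ := by
  induction ys generalizing zs φ with
  | nil =>
    rw [star_nil]
    have h1 : ∀ P : Forest R, bd (wordOf (braceWordT Mh [P] [])) φ = φ P := by
      intro P
      have := bd_wordOf_append (K := K) P [] φ
      simpa [braceWordT, wordOf, bd_single] using this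
    simp only [List.length_nil, Nat.mul_zero, splitsN_succ_sum]
    have h2 : ∀ p q : Forest R, ((splitsN 0 q).map fun r =>
        bd (wordOf (braceWordT Mh (p :: r) [])) φ).sum = if q = [] then φ p else 0 := by
      intro p q
      cases q <;> simp [splitsN, h1]
    simp only [h2]
    clear h1 h2
    induction zs generalizing φ with
    | nil => simp [D]
    | cons z zs ih => simp [D, ih (fun g => φ (z :: g))]
  | cons y ys ih =>
    rw [star_cons]
    have : 2 * (y :: ys).length + 1 = (2 * ys.length + 1) + 1 + 1 := by simp; ring
    rw [this, splitsN_succ_sum]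
    congr 1; funext P Q
    rw [splitsN_succ_sum]
    congr 1; funext B Q'
    simp only [braceWordT, bd_wordOf_append, bd_wordOf_cons]
    rw [← bd_fun_sum_list]
    simp only [ih]

end helpers

/-- Let `R` be a `K`-vector space and `M` the operation on
`R`-decorated planar rooted trees defined recursively by
`M(B₊ˣ(f₁); f₂) = B₊ˣ(f₁ ⋆ f₂)`.  Then `M` satisfies the brace identity
`M(M(t; f₂); f₃) = M(t; f₂ ⋆ f₃)` for every decorated tree `t` and all decorated
forests `f₂, f₃` (where `M` is extended linearly to `R^𝒯` in the first slot and
to `T(R^𝒯)` in the second); consequently `R^𝒯`, with the operations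
`M_{1q}(t; s₁⋯s_q) = M(t; s₁⋯s_q)`, is a brace algebra, i.e. these operations
satisfy the brace relation. -/
theorem tree_brace_identity_and_brace_relation
    (Mh : PTree R → Forest R → TreeMod K R)
    (star : Forest R → Forest R → ForestMod K R)
    (h : IsTreeBrace Mh star) :
    (∀ (t : PTree R) (f₂ f₃ : Forest R),
        (Mh t f₂).sum (fun u c => c • Mh u f₃) =
        (star f₂ f₃).sum fun g c => c • Mh t g) ∧
    (∀ (t : PTree R) (ys zs : Forest R),
        (Mh t ys).sum (fun u c => c • Mh u zs) =
          ((splitsN (2 * ys.length + 1) zs).map fun Zs =>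
            (wordOf (braceWordT Mh Zs ys)).sum fun g c => c • Mh t g).sum) := by
  obtain ⟨h1, h2⟩ := h
  obtain rfl : star = starRHS Mh := by funext X Y; exact h2 X Y
  have key : ∀ (t : PTree R) (f₂ f₃ : Forest R),
      bd (Mh t f₂) (fun u => Mh u f₃) = bd (starRHS Mh f₂ f₃) (fun g => Mh t g) := by
    intro t f₂ f₃
    have := brace_id Mh h1 t f₂ f₃ (fun u => Finsupp.single u (1 : K))
    simpa only [bd_self] using this
  refine ⟨key, fun t ys zs => ?_⟩
  exact (key t ys zs).trans (brace_word Mh ys zs (fun g => Mh t g)).symm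

end
end
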